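/- arXiv:1504.00395 — 3 statements merged into one kernel-verified Lean document; each statement's English description precedes it below -/
import Mathlib

section
/- Let p > 0, M ≥ 1, α > 0 and K > 0. Then there exist constants c* ∈ (0,1], c₁ > 0, c₂ > 0 and C > 0, depending only on p, M, α, K, such that the following holds. Let ν ∈ (0, c*] and let v : S¹ → ℝ be twice continuously differentiable with ∫_{S¹} v(x) dx = 0, sup_x (v′(x))⁺ ≤ M, ∫_{S¹} |v′(x)| dx ≤ M, sup_x |v″(x)| ≤ K·ν⁻², and ∫_{S¹} v′(x)² dx ≥ α·ν⁻¹. Then for every l ∈ [c₁·ν, c₂], ∫_{S¹} |v(x + l) − v(x)|^p dx ≥ C·l^{min(1,p)}. -/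
open Set

/-!
Let `z` be a minimum point of `v'`. Since `v'` has mean zero and `v' ≤ M`, integrating
`(M - v') (v' - v' z) ≥ 0` shows that `v' z` is at most of order `-1 / ν`. The bound on `v''` keeps
`v'` that negative on an interval of length of order `ν`, across which `v` falls by an amount `D`
independent of `ν`. As `v` climbs at slope at most `M`, every window of length `l` containing this
cliff, with `l` small compared to `D / M`, still sees a fall of at least `D / 2`. Such windows
occupy a set of measure of order `l`, which settles `p ≥ 1`.

For `p ≤ 1` a better bound comes from the ramps. The increments `δ x = v (x + l) - v x` have mean
zero, so `∫ δ⁺` is half of `∫ |δ|`, hence of order at least `l`. As `δ ≤ M * l`, this gives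
`∫ |δ| ^ p ≥ (M * l) ^ (p - 1) * ∫ δ⁺`, which is of order at least `l ^ p`.
-/

section Integral

open MeasureTheory

variable {f : ℝ → ℝ} {a b : ℝ}

lemma mul_le_integral_of_periodic {T s L m : ℝ} (hper : Function.Periodic f T) (hT : 0 < T)
    (hint : IntervalIntegrable f volume 0 T) (hf : ∀ x, 0 ≤ f x) (hL : 0 ≤ L)
    (hLT : L ≤ T) (hm : ∀ x ∈ Icc s (s + L), m ≤ f x) :
    L * m ≤ ∫ x in (0 : ℝ)..T, f x := by
  have hint' (c d : ℝ) : IntervalIntegrable f volume c d :=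
    hper.intervalIntegrable hT.ne' (t := 0) (by rwa [zero_add]) c d
  calc L * m = ∫ _ in s..(s + L), m := by simp
    _ ≤ ∫ x in s..(s + L), f x :=
      intervalIntegral.integral_mono_on (by linarith) (by simp) (hint' _ _) hm
    _ ≤ ∫ x in s..(s + T), f x :=
      intervalIntegral.integral_mono_interval le_rfl (by linarith) (by linarith)
        (.of_forall hf) (hint' _ _)
    _ = ∫ x in (0 : ℝ)..T, f x := by simpa using hper.intervalIntegral_add_eq s 0

lemma max_zero_le_rpow_mul_abs_rpow {t B p : ℝ} (hp : p ≤ 1) (hB : 0 ≤ B) (ht : t ≤ B) :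
    max t 0 ≤ B ^ (1 - p) * |t| ^ p := by
  rcases le_or_gt t 0 with ht0 | ht0
  · rw [max_eq_right ht0]
    positivity
  · calc max t 0 = t ^ (1 - p) * t ^ p := by
          rw [max_eq_left ht0.le, ← Real.rpow_add ht0, sub_add_cancel, Real.rpow_one]
      _ ≤ B ^ (1 - p) * |t| ^ p := by
          rw [abs_of_pos ht0]
          gcongr

lemma intervalIntegrable_max_zero (hf : IntervalIntegrable f volume a b) :
    IntervalIntegrable (fun x ↦ max (f x) 0) volume a b :=
  ⟨hf.1.pos_part, hf.2.pos_part⟩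

lemma integral_abs_eq_two_mul_integral_max_zero (hf : IntervalIntegrable f volume a b)
    (hmean : ∫ x in a..b, f x = 0) :
    ∫ x in a..b, |f x| = 2 * ∫ x in a..b, max (f x) 0 := by
  have habs (x : ℝ) : |f x| = 2 * max (f x) 0 - f x := by
    rcases le_total (f x) 0 with h | h
    · rw [abs_of_nonpos h, max_eq_right h, mul_zero, zero_sub]
    · rw [abs_of_nonneg h, max_eq_left h, two_mul, add_sub_cancel_right]
  simp only [habs]
  rw [intervalIntegral.integral_sub ((intervalIntegrable_max_zero hf).const_mul 2) hf, hmean,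
    sub_zero, intervalIntegral.integral_const_mul]

lemma integral_abs_le_mul_integral_abs_rpow {B p : ℝ} (hab : a ≤ b) (hp : p ≤ 1) (hB : 0 ≤ B)
    (hf : IntervalIntegrable f volume a b)
    (hfp : IntervalIntegrable (fun x ↦ |f x| ^ p) volume a b)
    (hmean : ∫ x in a..b, f x = 0) (hfB : ∀ x ∈ Icc a b, f x ≤ B) :
    ∫ x in a..b, |f x| ≤ 2 * B ^ (1 - p) * ∫ x in a..b, |f x| ^ p := by
  have hpos : ∫ x in a..b, max (f x) 0 ≤ ∫ x in a..b, B ^ (1 - p) * |f x| ^ p :=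
    intervalIntegral.integral_mono_on hab (intervalIntegrable_max_zero hf) (hfp.const_mul _)
      fun x hx ↦ max_zero_le_rpow_mul_abs_rpow hp hB (hfB x hx)
  rw [intervalIntegral.integral_const_mul] at hpos
  rw [integral_abs_eq_two_mul_integral_max_zero hf hmean]
  linarith

lemma exists_integral_sq_le_mul_neg {M : ℝ} (hab : a ≤ b) (hf : ContinuousOn f (Icc a b))
    (hmean : ∫ x in a..b, f x = 0) (hfM : ∀ x ∈ Icc a b, f x ≤ M) :
    ∃ z ∈ Icc a b, ∫ x in a..b, f x ^ 2 ≤ M * (b - a) * -f z := by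
  obtain ⟨z, hz, hmin⟩ := isCompact_Icc.exists_isMinOn (nonempty_Icc.2 hab) hf
  have hint : IntervalIntegrable f volume a b := hf.intervalIntegrable_of_Icc hab
  refine ⟨z, hz, ?_⟩
  calc ∫ x in a..b, f x ^ 2 ≤ ∫ x in a..b, ((M + f z) * f x - M * f z) := by
        refine intervalIntegral.integral_mono_on hab ((hf.pow 2).intervalIntegrable_of_Icc hab)
          ((hint.const_mul _).sub (by simp)) fun x hx ↦ ?_
        have := mul_nonneg (sub_nonneg.2 (hfM x hx)) (sub_nonneg.2 (hmin hx))
        linarith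
    _ = M * (b - a) * -f z := by
        rw [intervalIntegral.integral_sub (hint.const_mul _) (by simp),
          intervalIntegral.integral_const_mul, hmean, intervalIntegral.integral_const, smul_eq_mul]
        ring

end Integral

section Derivative

variable {v : ℝ → ℝ}

lemma sub_le_of_deriv_deriv_le {B x y : ℝ} (hv : Differentiable ℝ v)
    (hv' : Differentiable ℝ (deriv v)) (hB : ∀ t, deriv (deriv v) t ≤ B) (hxy : x ≤ y) :
    v y - v x ≤ deriv v x * (y - x) + B / 2 * (y - x) ^ 2 := by
  have hderiv (t : ℝ) : HasDerivAt (fun t ↦ v t - deriv v x * (t - x) - B / 2 * (t - x) ^ 2)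
      (deriv v t - deriv v x - B * (t - x)) t := by
    have hlin : HasDerivAt (fun t ↦ t - x) 1 t := (hasDerivAt_id t).sub_const x
    refine (((hv t).hasDerivAt.sub (hlin.const_mul (deriv v x))).sub
      ((hlin.pow 2).const_mul (B / 2))).congr_deriv ?_
    simp only [mul_one, Nat.cast_ofNat, Nat.add_one_sub_one, pow_one, sub_right_inj]
    ring
  have hanti := antitoneOn_of_hasDerivWithinAt_nonpos (convex_Ici x)
    (fun t _ ↦ (hderiv t).continuousAt.continuousWithinAt)
    (fun t _ ↦ (hderiv t).hasDerivWithinAt) fun t ht ↦ by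
      linarith [image_sub_le_mul_sub_of_deriv_le hv' hB (interior_subset ht : x ≤ t)]
  have hle := hanti self_mem_Ici hxy hxy
  simp only [sub_self] at hle
  linarith

lemma sub_le_of_deriv_le_neg {B s z : ℝ} (hv : Differentiable ℝ v)
    (hv' : Differentiable ℝ (deriv v)) (hB0 : 0 < B) (hB : ∀ t, deriv (deriv v) t ≤ B)
    (hs : 0 ≤ s) (hz : deriv v z ≤ -s) :
    v (z + s / B) - v z ≤ -(s ^ 2 / (2 * B)) := by
  have hw : 0 ≤ s / B := by positivity
  calc v (z + s / B) - v z ≤ deriv v z * (s / B) + B / 2 * (s / B) ^ 2 := by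
        simpa using sub_le_of_deriv_deriv_le hv hv' hB (le_add_of_nonneg_right hw : z ≤ z + s / B)
    _ ≤ -s * (s / B) + B / 2 * (s / B) ^ 2 := by gcongr
    _ = -(s ^ 2 / (2 * B)) := by field_simp; ring

lemma integral_deriv_eq_zero_of_periodic {T : ℝ} (hper : Function.Periodic v T)
    (hv : Differentiable ℝ v) (hv' : Continuous (deriv v)) :
    ∫ x in (0 : ℝ)..T, deriv v x = 0 := by
  rw [intervalIntegral.integral_deriv_eq_sub (fun x _ ↦ hv x) (hv'.intervalIntegrable _ _),
    ← zero_add T, hper 0, sub_self]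

lemma exists_deriv_le_neg_of_periodic {T M S : ℝ} (hT : 0 < T) (hM : 0 < M)
    (hper : Function.Periodic v T) (hv : Differentiable ℝ v) (hv' : Continuous (deriv v))
    (hvM : ∀ x, deriv v x ≤ M) (hsq : S ≤ ∫ x in (0 : ℝ)..T, deriv v x ^ 2) :
    ∃ z, deriv v z ≤ -(S / (M * T)) := by
  obtain ⟨z, -, hz⟩ := exists_integral_sq_le_mul_neg hT.le hv'.continuousOn
    (integral_deriv_eq_zero_of_periodic hper hv hv') fun x _ ↦ hvM x
  refine ⟨z, ?_⟩
  rw [le_neg, div_le_iff₀' (by positivity)]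
  simpa using hsq.trans hz

lemma exists_sub_le_neg_of_periodic {T M α K ν : ℝ} (hT : 0 < T) (hM : 0 < M) (hα : 0 ≤ α)
    (hK : 0 < K) (hν : 0 < ν) (hper : Function.Periodic v T) (hv : Differentiable ℝ v)
    (hv' : Differentiable ℝ (deriv v)) (hvM : ∀ x, deriv v x ≤ M)
    (hvK : ∀ x, deriv (deriv v) x ≤ K / ν ^ 2)
    (hsq : α / ν ≤ ∫ x in (0 : ℝ)..T, deriv v x ^ 2) :
    ∃ z, v (z + α / (M * T) / K * ν) - v z ≤ -((α / (M * T)) ^ 2 / (2 * K)) := by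
  obtain ⟨z, hz⟩ := exists_deriv_le_neg_of_periodic hT hM hper hv hv'.continuous hvM hsq
  have hslope : deriv v z ≤ -(α / (M * T) / ν) := by rwa [div_right_comm]
  have hwidth : α / (M * T) / ν / (K / ν ^ 2) = α / (M * T) / K * ν := by field_simp
  have hheight : (α / (M * T) / ν) ^ 2 / (2 * (K / ν ^ 2)) = (α / (M * T)) ^ 2 / (2 * K) := by
    field_simp
  refine ⟨z, ?_⟩
  rw [← hwidth, ← hheight]
  exact sub_le_of_deriv_le_neg hv hv' (by positivity) hvK (by positivity) hslope

end Derivative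

section ForwardDifference

variable {v : ℝ → ℝ} {T M D z w l p : ℝ}

lemma periodic_fwdDiff (hper : Function.Periodic v T) (l : ℝ) :
    Function.Periodic (fwdDiff l v) T := fun x ↦ by
  simp only [fwdDiff, add_right_comm x T l, hper (x + l), hper x]

lemma integral_fwdDiff_eq_zero_of_periodic (hper : Function.Periodic v T) (hv : Continuous v)
    (l : ℝ) : ∫ x in (0 : ℝ)..T, fwdDiff l v x = 0 := by
  have hshift : ∫ x in (0 : ℝ)..T, v (x + l) = ∫ x in (0 : ℝ)..T, v x := by
    simpa [add_comm] using hper.intervalIntegral_add_eq l 0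
  have hvl : Continuous fun x ↦ v (x + l) := by fun_prop
  simp only [fwdDiff]
  rw [intervalIntegral.integral_sub (hvl.intervalIntegrable _ _) (hv.intervalIntegrable _ _),
    hshift, sub_self]

lemma fwdDiff_le_mul_of_deriv_le (hv : Differentiable ℝ v) (hvM : ∀ x, deriv v x ≤ M)
    (hl : 0 ≤ l) (x : ℝ) : fwdDiff l v x ≤ M * l := by
  simpa [fwdDiff] using
    image_sub_le_mul_sub_of_deriv_le hv hvM (le_add_of_nonneg_right hl : x ≤ x + l)

lemma fwdDiff_le_of_sub_le {x : ℝ} (hv : Differentiable ℝ v) (hvM : ∀ x, deriv v x ≤ M)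
    (hdrop : v (z + w) - v z ≤ -D) (hxz : x ≤ z) (hzx : z + w ≤ x + l) :
    fwdDiff l v x ≤ M * (l - w) - D := by
  have hleft : v z - v x ≤ M * (z - x) := image_sub_le_mul_sub_of_deriv_le hv hvM hxz
  have hright : v (x + l) - v (z + w) ≤ M * (x + l - (z + w)) :=
    image_sub_le_mul_sub_of_deriv_le hv hvM hzx
  simp only [fwdDiff]
  linarith

lemma continuous_fwdDiff (hv : Continuous v) (l : ℝ) : Continuous (fwdDiff l v) := by
  unfold fwdDiff
  fun_prop

lemma continuous_abs_fwdDiff_rpow (hv : Continuous v) (hp : 0 ≤ p) :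
    Continuous fun x ↦ |fwdDiff l v x| ^ p :=
  (continuous_fwdDiff hv l).abs.rpow_const fun _ ↦ .inr hp

lemma mul_rpow_le_integral_abs_fwdDiff_rpow (hp : 0 ≤ p) (hT : 0 < T) (hM : 0 ≤ M) (hw : 0 ≤ w)
    (hwl : 2 * w ≤ l) (hlT : l ≤ T) (hlD : M * l ≤ D / 2)
    (hper : Function.Periodic v T) (hv : Differentiable ℝ v) (hvM : ∀ x, deriv v x ≤ M)
    (hdrop : v (z + w) - v z ≤ -D) :
    l / 2 * (D / 2) ^ p ≤ ∫ x in (0 : ℝ)..T, |fwdDiff l v x| ^ p := by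
  refine mul_le_integral_of_periodic (s := z - l / 2)
    ((periodic_fwdDiff hper l).comp fun t ↦ |t| ^ p) hT
    ((continuous_abs_fwdDiff_rpow hv.continuous hp).intervalIntegrable _ _)
    (fun x ↦ by positivity) (by linarith) (by linarith) fun x ⟨hx₁, hx₂⟩ ↦ ?_
  have hfall : fwdDiff l v x ≤ M * (l - w) - D :=
    fwdDiff_le_of_sub_le hv hvM hdrop (by linarith) (by linarith)
  have hclimb : M * (l - w) ≤ M * l := by gcongr; linarith
  have hD : 0 ≤ D / 2 := (mul_nonneg hM (by linarith)).trans hlD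
  exact Real.rpow_le_rpow hD (le_abs.2 (.inr (by linarith))) hp

lemma mul_rpow_le_integral_abs_fwdDiff_rpow_of_le_one (hp : 0 ≤ p) (hp1 : p ≤ 1)
    (hM : 0 < M) (hl : 0 < l) (hw : 0 ≤ w) (hwl : 2 * w ≤ l) (hlT : l ≤ T)
    (hlD : M * l ≤ D / 2) (hper : Function.Periodic v T) (hv : Differentiable ℝ v)
    (hvM : ∀ x, deriv v x ≤ M) (hdrop : v (z + w) - v z ≤ -D) :
    D / (8 * M ^ (1 - p)) * l ^ p ≤ ∫ x in (0 : ℝ)..T, |fwdDiff l v x| ^ p := by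
  have hT : 0 < T := hl.trans_le hlT
  have hL1 : l / 2 * (D / 2) ≤ ∫ x in (0 : ℝ)..T, |fwdDiff l v x| := by
    simpa using mul_rpow_le_integral_abs_fwdDiff_rpow zero_le_one hT hM.le hw hwl hlT hlD hper
      hv hvM hdrop
  have hramp := integral_abs_le_mul_integral_abs_rpow hT.le hp1 (by positivity : 0 ≤ M * l)
    ((continuous_fwdDiff hv.continuous l).intervalIntegrable _ _)
    ((continuous_abs_fwdDiff_rpow hv.continuous hp).intervalIntegrable _ _)
    (integral_fwdDiff_eq_zero_of_periodic hper hv.continuous l)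
    fun x _ ↦ fwdDiff_le_mul_of_deriv_le hv hvM hl.le x
  calc D / (8 * M ^ (1 - p)) * l ^ p = l / 2 * (D / 2) / (2 * (M * l) ^ (1 - p)) := by
        rw [Real.mul_rpow hM.le hl.le, Real.rpow_sub hl, Real.rpow_one]
        field_simp
        norm_num
    _ ≤ ∫ x in (0 : ℝ)..T, |fwdDiff l v x| ^ p := by
        rw [div_le_iff₀' (by positivity)]
        exact hL1.trans hramp

end ForwardDifference

theorem stmt_9_general (T M α K : ℝ) (hT : 0 < T) (hM : 0 < M) (hα : 0 < α) (hK : 0 < K) :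
    ∃ c₁ c₂ : ℝ, 0 < c₁ ∧ 0 < c₂ ∧ ∀ p : ℝ, 0 < p → ∃ C : ℝ, 0 < C ∧
      ∀ ν : ℝ, 0 < ν → ∀ v : ℝ → ℝ,
        Function.Periodic v T → Differentiable ℝ v → Differentiable ℝ (deriv v) →
        (∀ x, deriv v x ≤ M) →
        (∀ x, deriv (deriv v) x ≤ K / ν ^ 2) →
        α / ν ≤ ∫ x in (0 : ℝ)..T, deriv v x ^ 2 →
        ∀ l ∈ Icc (c₁ * ν) c₂,
          C * l ^ min 1 p ≤ ∫ x in (0 : ℝ)..T, |v (x + l) - v x| ^ p := by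
  obtain ⟨A, hA, hAdef⟩ : ∃ A, 0 < A ∧ α / (M * T) = A := ⟨_, by positivity, rfl⟩
  obtain ⟨D, hD, hDdef⟩ : ∃ D, 0 < D ∧ A ^ 2 / (2 * K) = D := ⟨_, by positivity, rfl⟩
  refine ⟨2 * (A / K), min T (D / (2 * M)), by positivity, by positivity, fun p hp ↦
    ⟨if p ≤ 1 then D / (8 * M ^ (1 - p)) else (D / 2) ^ p / 2, by split_ifs <;> positivity, ?_⟩⟩
  intro ν hν v hper hv hv' hvM hvK hsq l ⟨hl₁, hl₂⟩
  obtain ⟨z, hdrop⟩ := exists_sub_le_neg_of_periodic hT hM hα.le hK hν hper hv hv' hvM hvK hsq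
  rw [hAdef, hDdef] at hdrop
  have hw : 0 < A / K * ν := by positivity
  have hwl : 2 * (A / K * ν) ≤ l := by linarith
  have hlT : l ≤ T := hl₂.trans (min_le_left _ _)
  have hlD : M * l ≤ D / 2 := by
    have := (le_div_iff₀ (by positivity)).1 (hl₂.trans (min_le_right _ _))
    linarith
  split_ifs with hp1
  · rw [min_eq_right hp1]
    exact mul_rpow_le_integral_abs_fwdDiff_rpow_of_le_one hp.le hp1 hM (by linarith)
      hw.le hwl hlT hlD hper hv hvM hdrop
  · rw [min_eq_left (not_le.1 hp1).le, Real.rpow_one, div_mul_comm]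
    exact mul_rpow_le_integral_abs_fwdDiff_rpow hp.le hT hM.le hw.le hwl hlT hlD hper hv
      hvM hdrop

/-- The deterministic lower bound (claim (77.3)) from the proof of Theorem 13.2 of the
paper: for a mean-zero C² function `v` on the circle S¹ = ℝ/ℤ (represented as a
1-periodic function) with `sup (v')⁺ ≤ M`, `|v'|_{L¹} ≤ M`, `|v''|_∞ ≤ K ν⁻²` and
`‖v'‖_{L²}² ≥ α ν⁻¹`, one has `∫ |v(x+l) − v(x)|^p dx ≥ C l^{min(1,p)}` for all
`l ∈ [c₁ν, c₂]`, where `c* ∈ (0,1]`, `c₁, c₂, C > 0` depend only on `p, M, α, K` and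
`ν ∈ (0, c*]`. -/
theorem stmt_9 (p M α K : ℝ) (hp : 0 < p) (hM : 1 ≤ M) (hα : 0 < α) (hK : 0 < K) :
    ∃ cs c₁ c₂ C : ℝ, 0 < cs ∧ cs ≤ 1 ∧ 0 < c₁ ∧ 0 < c₂ ∧ 0 < C ∧
      ∀ ν ∈ Ioc (0:ℝ) cs, ∀ v : ℝ → ℝ,
        Function.Periodic v 1 → ContDiff ℝ 2 v →
        (∫ x in (0:ℝ)..1, v x) = 0 →
        (∀ x, max (deriv v x) 0 ≤ M) →
        (∫ x in (0:ℝ)..1, |deriv v x|) ≤ M →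
        (∀ x, |deriv (deriv v) x| ≤ K / ν ^ 2) →
        α / ν ≤ ∫ x in (0:ℝ)..1, (deriv v x) ^ 2 →
        ∀ l ∈ Icc (c₁ * ν) c₂,
          C * l ^ min 1 p ≤ ∫ x in (0:ℝ)..1, |v (x + l) - v x| ^ p := by
  obtain ⟨c₁, c₂, hc₁, hc₂, h⟩ := stmt_9_general 1 M α K one_pos (by linarith) hα hK
  obtain ⟨C, hC, hbound⟩ := h p hp
  exact ⟨1, c₁, c₂, C, one_pos, le_rfl, hc₁, hc₂, hC, fun ν hν v hper hv _ hvM _ hvK hsq ↦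
    hbound ν hν.1 v hper (hv.differentiable two_ne_zero) hv.differentiable_deriv_two
      (fun x ↦ (le_max_left _ _).trans (hvM x)) (fun x ↦ (le_abs_self _).trans (hvK x)) hsq⟩
end

section
/- Let u : S¹ → ℝ be continuously differentiable with ∫_{S¹} u(x) dx = 0, and let l ∈ (0,1]. Then ∫_{S¹} |u(x + l) − u(x)| dx ≤ 2·l·sup_x (u′(x))⁺, where a⁺ = max(a,0). -/
/-!
The increment `x ↦ u (x + l) - u x` of a periodic function integrates to zero over a period, so its
`L¹` norm is twice the integral of its positive part. By the mean value inequality that positive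
part is at most `l` times the supremum of the positive part of `u'`.
-/

open MeasureTheory Set

theorem intervalIntegral_abs_eq_two_mul_posPart_of_integral_eq_zero {f : ℝ → ℝ} {μ : Measure ℝ}
    {a b : ℝ} (hf : IntervalIntegrable f μ a b) (hzero : ∫ x in a..b, f x ∂μ = 0) :
    ∫ x in a..b, |f x| ∂μ = 2 * ∫ x in a..b, (f x)⁺ ∂μ := by
  have abs_add_self (x : ℝ) : |f x| + f x = 2 * (f x)⁺ := by
    rw [abs_add_eq_two_nsmul_posPart, nsmul_eq_mul, Nat.cast_ofNat]
  calc
    ∫ x in a..b, |f x| ∂μ = ∫ x in a..b, (|f x| + f x) ∂μ := by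
      rw [intervalIntegral.integral_add hf.abs hf, hzero, add_zero]
    _ = 2 * ∫ x in a..b, (f x)⁺ ∂μ := by
      simp only [abs_add_self, intervalIntegral.integral_const_mul]

theorem intervalIntegral_comp_add_right_sub_self_eq_zero_of_periodic {E : Type*}
    [NormedAddCommGroup E] [NormedSpace ℝ E] {f : ℝ → E} {T t : ℝ} (hper : Function.Periodic f T)
    (hint : IntervalIntegrable f volume t (t + T)) (l : ℝ) :
    ∫ x in t..t + T, (f (x + l) - f x) = 0 := by
  have shifted_integrable : IntervalIntegrable (fun x ↦ f (x + l)) volume t (t + T) := by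
    simpa [add_right_comm] using
      ((hper.intervalIntegrable_iff (t₂ := t + l)).mp hint).comp_add_right l
  rw [intervalIntegral.integral_sub shifted_integrable hint,
    intervalIntegral.integral_comp_add_right, add_right_comm, hper.intervalIntegral_add_eq _ t,
    sub_self]

theorem periodic_deriv {𝕜 E : Type*} [NontriviallyNormedField 𝕜] [NormedAddCommGroup E]
    [NormedSpace 𝕜 E] {f : 𝕜 → E} {T : 𝕜} (hper : Function.Periodic f T) :
    Function.Periodic (deriv f) T := fun x ↦ by
  rw [← deriv_comp_add_const, hper.funext]

theorem bddAbove_range_deriv_of_periodic {u : ℝ → ℝ} {T : ℝ} (hper : Function.Periodic u T)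
    (hT : T ≠ 0) (hu : ContDiff ℝ 1 u) : BddAbove (range (deriv u)) :=
  ((periodic_deriv hper).compact_of_continuous hT hu.continuous_deriv_one).bddAbove

theorem posPart_sub_le_mul_iSup_posPart_deriv {u : ℝ → ℝ} (hu : Differentiable ℝ u)
    (hbdd : BddAbove (range (deriv u))) {l : ℝ} (hl : 0 ≤ l) (x : ℝ) :
    (u (x + l) - u x)⁺ ≤ l * ⨆ y, (deriv u y)⁺ := by
  have bddAbove_posPart : BddAbove (range fun y ↦ (deriv u y)⁺) := hbdd.range_comp_left posPart_mono
  have deriv_le (y : ℝ) : deriv u y ≤ ⨆ z, (deriv u z)⁺ :=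
    (le_posPart _).trans (le_ciSup bddAbove_posPart y)
  have increment_le : u (x + l) - u x ≤ (⨆ y, (deriv u y)⁺) * (x + l - x) :=
    image_sub_le_mul_sub_of_deriv_le hu deriv_le (le_add_of_nonneg_right hl)
  rw [add_sub_cancel_left, mul_comm] at increment_le
  exact sup_le increment_le (mul_nonneg hl (Real.iSup_nonneg fun _ ↦ posPart_nonneg _))

theorem stmt_10_general {u : ℝ → ℝ} {T : ℝ} (hT : 0 ≤ T) (hper : Function.Periodic u T)
    (hu : Differentiable ℝ u) (hbdd : BddAbove (range (deriv u))) {l : ℝ} (hl : 0 ≤ l) (t : ℝ) :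
    ∫ x in t..t + T, |u (x + l) - u x| ≤ 2 * T * l * ⨆ x, (deriv u x)⁺ := by
  have increment_continuous : Continuous fun x ↦ u (x + l) - u x := by
    have := hu.continuous
    fun_prop
  have increment_integral : ∫ x in t..t + T, (u (x + l) - u x) = 0 :=
    intervalIntegral_comp_add_right_sub_self_eq_zero_of_periodic hper
      (hu.continuous.intervalIntegrable _ _) l
  calc
    ∫ x in t..t + T, |u (x + l) - u x| = 2 * ∫ x in t..t + T, (u (x + l) - u x)⁺ :=
      intervalIntegral_abs_eq_two_mul_posPart_of_integral_eq_zero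
        (increment_continuous.intervalIntegrable _ _) increment_integral
    _ ≤ 2 * ∫ _ in t..t + T, l * ⨆ y, (deriv u y)⁺ := by
      gcongr
      exact intervalIntegral.integral_mono (le_add_of_nonneg_right hT)
        ((increment_continuous.sup continuous_const).intervalIntegrable _ _)
        intervalIntegrable_const (posPart_sub_le_mul_iSup_posPart_deriv hu hbdd hl)
    _ = 2 * T * l * ⨆ x, (deriv u x)⁺ := by
      rw [intervalIntegral.integral_const, add_sub_cancel_left, smul_eq_mul]
      ring

/-- The estimate from part 1 of Theorem 13.2 of the paper: for a mean-zero C¹ function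
`u` on the circle S¹ = ℝ/ℤ (represented as a 1-periodic function) and `l ∈ (0,1]`,
`∫ |u(x+l) − u(x)| dx ≤ 2 l sup_x (u'(x))⁺`. -/
theorem stmt_10 (u : ℝ → ℝ) (hper : Function.Periodic u 1) (hu : ContDiff ℝ 1 u)
    (hmean : ∫ x in (0:ℝ)..1, u x = 0) (l : ℝ) (hl : l ∈ Set.Ioc (0:ℝ) 1) :
    (∫ x in (0:ℝ)..1, |u (x + l) - u x|) ≤ 2 * l * ⨆ x : ℝ, max (deriv u x) 0 := by
  simpa [posPart_def] using stmt_10_general zero_le_one hper (hu.differentiable one_ne_zero)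
    (bddAbove_range_deriv_of_periodic hper one_ne_zero hu) hl.1.le 0
end

section
/- For all C₀ > 0 and c₀ > 0 there exists M₀ ≥ 2 such that for every real M ≥ M₀ there exist constants c₃ > 0 and c₄ > 0 (depending on C₀, c₀, M) with the following property: for every integer k ≥ 1 and every sequence (a_n)_{n≥1} of nonnegative reals satisfying a_n ≤ C₀·n⁻² for all n ≥ 1 and Σ_{n=1}^∞ sin²(nπ/k)·a_n ≥ c₀·k⁻¹, one has c₃·k⁻² ≤ (2k(M − M⁻¹))⁻¹ · Σ_{n : M⁻¹k ≤ n ≤ Mk} a_n ≤ c₄·k⁻². -/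
/-!
All that matters about the weights `w n = sin² (n π / κ)` is `0 ≤ w n ≤ 1` and `w n ≤ (A n / κ)²`
with `A = π`. Split the series `∑ w n * a n` at `κ / M` and `M κ`. For `n < κ / M` the second bound
on `w n` cancels the decay of `a n`, so each of the at most `κ / M` terms is at most `C A² / κ²`;
for `n > M κ` the series is bounded by a tail of `∑ C / n²`. Together the two ends contribute at
most `C (A² + 2) / (M κ)`, which for large `M` is at most half of the assumed lower bound `c / κ`.
The rest must come from the window. For the upper bound, each of the at most `M κ` terms in the
window is at most `C (M / κ)²`.
-/

open Finset

section Sums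

theorem sum_range_add_sum_Icc_add_tsum_nat_add {E : Type*} [AddCommGroup E] [TopologicalSpace E]
    [IsTopologicalAddGroup E] [T2Space E] {f : ℕ → E} (hf : Summable f) {l u : ℕ}
    (hlu : l ≤ u + 1) :
    ∑ n ∈ range l, f n + ∑ n ∈ Icc l u, f n + ∑' n, f (n + (u + 1)) = ∑' n, f n := by
  rw [← Ico_add_one_right_eq_Icc, sum_range_add_sum_Ico f hlu, hf.sum_add_tsum_nat_add]

theorem sum_range_ceil_le_mul {f : ℕ → ℝ} {x b : ℝ} (hx : 0 < x) (hb : 0 ≤ b) (hf₀ : f 0 ≤ 0)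
    (hf : ∀ n, 1 ≤ n → f n ≤ b) : ∑ n ∈ range ⌈x⌉₊, f n ≤ x * b := by
  obtain ⟨m, hm⟩ : ∃ m, ⌈x⌉₊ = m + 1 := Nat.exists_eq_add_one.mpr (Nat.ceil_pos.mpr hx)
  have hmx : (m : ℝ) ≤ x := (Nat.lt_ceil.mp (by lia)).le
  calc ∑ n ∈ range ⌈x⌉₊, f n
      = ∑ n ∈ range m, f (n + 1) + f 0 := by rw [hm, sum_range_succ']
    _ ≤ ∑ _n ∈ range m, b + 0 := by gcongr with n; exact hf _ n.succ_pos
    _ = m * b := by simp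
    _ ≤ x * b := by gcongr

theorem summable_of_nonneg_of_le_div_sq {f : ℕ → ℝ} {C : ℝ} (hf₀ : ∀ n, 1 ≤ n → 0 ≤ f n)
    (hf : ∀ n, 1 ≤ n → f n ≤ C / (n : ℝ) ^ 2) : Summable f := by
  have hbound : Summable fun n : ℕ ↦ C / (n : ℝ) ^ 2 := by
    simpa only [div_eq_mul_inv] using (Real.summable_nat_pow_inv.mpr one_lt_two).mul_left C
  rw [← summable_nat_add_iff 1] at hbound ⊢
  exact hbound.of_nonneg_of_le (fun n ↦ hf₀ _ n.succ_pos) fun n ↦ hf _ n.succ_pos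

theorem tsum_nat_add_le_of_le_div_sq {f : ℕ → ℝ} {C : ℝ} {m : ℕ} (hC : 0 ≤ C)
    (hf₀ : ∀ n, m < n → 0 ≤ f n) (hf : ∀ n, m < n → f n ≤ C / (n : ℝ) ^ 2) :
    ∑' n, f (n + (m + 1)) ≤ C * (2 / (m + 1)) := by
  refine Real.tsum_le_of_sum_range_le (fun n ↦ hf₀ _ (by lia)) fun N ↦ ?_
  calc ∑ n ∈ range N, f (n + (m + 1))
      = ∑ n ∈ Ioo m (m + 1 + N), f n := by
        rw [← Ico_add_one_left_eq_Ioo, sum_Ico_eq_sum_range, add_tsub_cancel_left]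
        simp only [add_comm (m + 1)]
    _ ≤ ∑ n ∈ Ioo m (m + 1 + N), C * ((n : ℝ) ^ 2)⁻¹ :=
        sum_le_sum fun n hn ↦ (hf n (mem_Ioo.mp hn).1).trans_eq (div_eq_mul_inv _ _)
    _ = C * ∑ n ∈ Ioo m (m + 1 + N), ((n : ℝ) ^ 2)⁻¹ := (mul_sum ..).symm
    _ ≤ C * (2 / (m + 1)) := by gcongr; exact sum_Ioo_inv_sq_le m _

theorem sum_Icc_ceil_floor_le_of_le_div_sq {a : ℕ → ℝ} {C x y : ℝ} (hC : 0 ≤ C) (hx : 0 < x)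
    (hy : 0 ≤ y) (ha : ∀ n, 1 ≤ n → a n ≤ C / (n : ℝ) ^ 2) :
    ∑ n ∈ Icc ⌈x⌉₊ ⌊y⌋₊, a n ≤ y * (C / x ^ 2) := by
  have hceil : 1 ≤ ⌈x⌉₊ := Nat.ceil_pos.mpr hx
  have hterm : ∀ n ∈ Icc ⌈x⌉₊ ⌊y⌋₊, a n ≤ C / x ^ 2 := fun n hn ↦ by
    have hn := (mem_Icc.mp hn).1
    have hxn : x ≤ n := Nat.ceil_le.mp hn
    exact (ha n (hceil.trans hn)).trans (by gcongr)
  have hcard : (#(Icc ⌈x⌉₊ ⌊y⌋₊) : ℝ) ≤ y :=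
    (Nat.cast_le.mpr (by rw [Nat.card_Icc]; lia)).trans (Nat.floor_le hy)
  calc ∑ n ∈ Icc ⌈x⌉₊ ⌊y⌋₊, a n
      ≤ #(Icc ⌈x⌉₊ ⌊y⌋₊) * (C / x ^ 2) := by
        simpa only [nsmul_eq_mul] using sum_le_card_nsmul _ _ _ hterm
    _ ≤ y * (C / x ^ 2) := by gcongr

end Sums

section WeightedSums

variable {w a : ℕ → ℝ} {C A θ x y κ M c : ℝ}

theorem tsum_mul_le_add_sum_Icc_ceil_floor (hx : 0 < x) (hxy : x ≤ y)
    (hw₀ : ∀ n, 0 ≤ w n) (hw₁ : ∀ n, w n ≤ 1) (hwθ : ∀ n, w n ≤ (θ * n) ^ 2)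
    (ha₀ : ∀ n, 1 ≤ n → 0 ≤ a n) (ha : ∀ n, 1 ≤ n → a n ≤ C / (n : ℝ) ^ 2) :
    ∑' n, w n * a n ≤
      x * (C * θ ^ 2) + ∑ n ∈ Icc ⌈x⌉₊ ⌊y⌋₊, a n + C * (2 / y) := by
  have hC : 0 ≤ C := by simpa using (ha₀ 1 le_rfl).trans (ha 1 le_rfl)
  have hy : 0 < y := hx.trans_le hxy
  have hwa₀ : w 0 * a 0 = 0 := by
    rw [le_antisymm (by simpa using hwθ 0) (hw₀ 0), zero_mul]
  have hwa_nonneg (n : ℕ) (hn : 1 ≤ n) : 0 ≤ w n * a n := mul_nonneg (hw₀ n) (ha₀ n hn)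
  have hwa_le (n : ℕ) (hn : 1 ≤ n) : w n * a n ≤ a n := mul_le_of_le_one_left (ha₀ n hn) (hw₁ n)
  have hwa_decay (n : ℕ) (hn : 1 ≤ n) : w n * a n ≤ C / (n : ℝ) ^ 2 := (hwa_le n hn).trans (ha n hn)
  have hwa_small (n : ℕ) (hn : 1 ≤ n) : w n * a n ≤ C * θ ^ 2 := by
    calc w n * a n ≤ (θ * n) ^ 2 * (C / (n : ℝ) ^ 2) :=
          mul_le_mul (hwθ n) (ha n hn) (ha₀ n hn) (sq_nonneg _)
      _ = C * θ ^ 2 := by field_simp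
  have hsummable : Summable fun n ↦ w n * a n :=
    summable_of_nonneg_of_le_div_sq hwa_nonneg hwa_decay
  have hlu : ⌈x⌉₊ ≤ ⌊y⌋₊ + 1 := (Nat.ceil_mono hxy).trans (Nat.ceil_le_floor_add_one y)
  rw [← sum_range_add_sum_Icc_add_tsum_nat_add hsummable hlu]
  gcongr ?_ + ?_ + ?_
  · exact sum_range_ceil_le_mul hx (by positivity) hwa₀.le hwa_small
  · exact sum_le_sum fun n hn ↦ hwa_le n ((Nat.ceil_pos.mpr hx).trans_le (mem_Icc.mp hn).1)
  · calc ∑' n, w (n + (⌊y⌋₊ + 1)) * a (n + (⌊y⌋₊ + 1))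
        ≤ C * (2 / (⌊y⌋₊ + 1)) :=
          tsum_nat_add_le_of_le_div_sq hC (fun n hn ↦ hwa_nonneg n (by lia))
            fun n hn ↦ hwa_decay n (by lia)
      _ ≤ C * (2 / y) := by gcongr; exact (Nat.lt_floor_add_one y).le

theorem half_div_le_sum_window (hκ : 0 < κ) (hM : 1 ≤ M)
    (hMc : 2 * C * (A ^ 2 + 2) ≤ M * c)
    (hw₀ : ∀ n, 0 ≤ w n) (hw₁ : ∀ n, w n ≤ 1) (hwA : ∀ n, w n ≤ (A / κ * n) ^ 2)
    (ha₀ : ∀ n, 1 ≤ n → 0 ≤ a n) (ha : ∀ n, 1 ≤ n → a n ≤ C / (n : ℝ) ^ 2)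
    (hsum : c / κ ≤ ∑' n, w n * a n) :
    c / 2 / κ ≤ ∑ n ∈ Icc ⌈M⁻¹ * κ⌉₊ ⌊M * κ⌋₊, a n := by
  have hM₀ : 0 < M := one_pos.trans_le hM
  have hwindow : M⁻¹ * κ ≤ M * κ := by gcongr; exact (inv_le_one_of_one_le₀ hM).trans hM
  have hsplit := tsum_mul_le_add_sum_Icc_ceil_floor (by positivity) hwindow hw₀ hw₁ hwA ha₀ ha
  have hends : M⁻¹ * κ * (C * (A / κ) ^ 2) + C * (2 / (M * κ)) ≤ c / 2 / κ := by
    calc M⁻¹ * κ * (C * (A / κ) ^ 2) + C * (2 / (M * κ))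
        = 2 * C * (A ^ 2 + 2) / M / 2 / κ := by field_simp
      _ ≤ c / 2 / κ := by gcongr; exact (div_le_iff₀' hM₀).mpr hMc
  have hhalves : c / κ = c / 2 / κ + c / 2 / κ := by ring
  linarith

theorem sum_window_le (hC : 0 ≤ C) (hκ : 0 < κ) (hM : 0 < M)
    (ha : ∀ n, 1 ≤ n → a n ≤ C / (n : ℝ) ^ 2) :
    ∑ n ∈ Icc ⌈M⁻¹ * κ⌉₊ ⌊M * κ⌋₊, a n ≤ C * M ^ 3 / κ :=
  calc ∑ n ∈ Icc ⌈M⁻¹ * κ⌉₊ ⌊M * κ⌋₊, a n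
      ≤ M * κ * (C / (M⁻¹ * κ) ^ 2) :=
        sum_Icc_ceil_floor_le_of_le_div_sq hC (by positivity) (by positivity) ha
    _ = C * M ^ 3 / κ := by field_simp

end WeightedSums

theorem stmt_14_general (C₀ c₀ A : ℝ) (hC₀ : 0 < C₀) (hc₀ : 0 < c₀) :
    ∃ M₀ : ℝ, 2 ≤ M₀ ∧ ∀ M : ℝ, M₀ ≤ M →
      ∃ c₃ > (0 : ℝ), ∃ c₄ > (0 : ℝ), ∀ κ : ℝ, 0 < κ → ∀ w a : ℕ → ℝ,
        (∀ n, 0 ≤ w n) → (∀ n, w n ≤ 1) → (∀ n, w n ≤ (A / κ * n) ^ 2) →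
        (∀ n, 1 ≤ n → 0 ≤ a n) → (∀ n, 1 ≤ n → a n ≤ C₀ / (n : ℝ) ^ 2) →
        c₀ / κ ≤ ∑' n, w n * a n →
        c₃ / κ ^ 2 ≤ (2 * κ * (M - M⁻¹))⁻¹ * ∑ n ∈ Icc ⌈M⁻¹ * κ⌉₊ ⌊M * κ⌋₊, a n ∧
          (2 * κ * (M - M⁻¹))⁻¹ * ∑ n ∈ Icc ⌈M⁻¹ * κ⌉₊ ⌊M * κ⌋₊, a n ≤ c₄ / κ ^ 2 := by
  refine ⟨max 2 (2 * C₀ * (A ^ 2 + 2) / c₀), le_max_left _ _, fun M hM ↦ ?_⟩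
  have hM₂ : 2 ≤ M := (le_max_left _ _).trans hM
  have hMc : 2 * C₀ * (A ^ 2 + 2) ≤ M * c₀ := (div_le_iff₀ hc₀).mp ((le_max_right _ _).trans hM)
  have hgap : 0 < M - M⁻¹ := by linarith [inv_le_one_of_one_le₀ (one_le_two.trans hM₂)]
  refine ⟨c₀ / 2 / (2 * (M - M⁻¹)), by positivity, C₀ * M ^ 3 / (2 * (M - M⁻¹)), by positivity,
    fun κ hκ w a hw₀ hw₁ hwA ha₀ ha hsum ↦ ?_⟩
  have hnormalize (s : ℝ) : s / (2 * (M - M⁻¹)) / κ ^ 2 = (2 * κ * (M - M⁻¹))⁻¹ * (s / κ) := by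
    field_simp
  rw [hnormalize, hnormalize]
  constructor <;> gcongr
  · exact half_div_le_sum_window hκ (by linarith) hMc hw₀ hw₁ hwA ha₀ ha hsum
  · exact sum_window_le hC₀.le hκ (by linarith) ha

/-- The deterministic summation lemma at the core of Theorem 14.2 of the paper (spectral
power law `E_k ∼ k⁻²`): if `0 ≤ a_n ≤ C₀ n⁻²` and `Σ_n sin²(nπ/k) a_n ≥ c₀ k⁻¹`, then
for every sufficiently large `M` the normalized window sum
`(2k(M − M⁻¹))⁻¹ Σ_{M⁻¹k ≤ n ≤ Mk} a_n` is comparable to `k⁻²`. -/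
theorem stmt_14 (C₀ c₀ : ℝ) (hC₀ : 0 < C₀) (hc₀ : 0 < c₀) :
    ∃ M₀ : ℝ, 2 ≤ M₀ ∧ ∀ M : ℝ, M₀ ≤ M →
      ∃ c₃ > (0:ℝ), ∃ c₄ > (0:ℝ), ∀ k : ℕ, 1 ≤ k → ∀ a : ℕ → ℝ,
        (∀ n : ℕ, 1 ≤ n → 0 ≤ a n) →
        (∀ n : ℕ, 1 ≤ n → a n ≤ C₀ / (n : ℝ) ^ 2) →
        (c₀ / (k : ℝ) ≤ ∑' n : ℕ, Real.sin ((n : ℝ) * Real.pi / (k : ℝ)) ^ 2 * a n) →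
        c₃ / (k : ℝ) ^ 2 ≤
            (2 * (k : ℝ) * (M - M⁻¹))⁻¹ *
              ∑ n ∈ Finset.Icc ⌈M⁻¹ * (k : ℝ)⌉₊ ⌊M * (k : ℝ)⌋₊, a n ∧
          (2 * (k : ℝ) * (M - M⁻¹))⁻¹ *
              ∑ n ∈ Finset.Icc ⌈M⁻¹ * (k : ℝ)⌉₊ ⌊M * (k : ℝ)⌋₊, a n ≤
            c₄ / (k : ℝ) ^ 2 := by
  obtain ⟨M₀, hM₀, h⟩ := stmt_14_general C₀ c₀ Real.pi hC₀ hc₀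
  refine ⟨M₀, hM₀, fun M hM ↦ ?_⟩
  obtain ⟨c₃, hc₃, c₄, hc₄, hbounds⟩ := h M hM
  refine ⟨c₃, hc₃, c₄, hc₄, fun k hk a ↦ hbounds k (Nat.cast_pos.mpr hk) _ a
    (fun n ↦ sq_nonneg _) (fun n ↦ Real.sin_sq_le_one _) fun n ↦ ?_⟩
  rw [div_mul_eq_mul_div, mul_comm Real.pi]
  exact Real.sin_sq_le_sq
end
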